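/- Let P be a complex polynomial of degree n > 2 having no zeros in |z| < 1, let α ∈ ℂ with |α| ≤ 1, and let R ≥ 1. Then max_{|z|=R}|P(z)| ≤ ((R^n + 1)/2)·max_{|z|=1}|P(z)| − |α|·((R^n − 1)/2)·min_{|z|=1}|P(z)| − ((R^n − 1)/n − (R^{n−2} − 1)/(n−2))·|P′(0)|. -/

import Mathlib

open Polynomial Metric

/-- The maximum of `|P(z)|` over the circle `|z| = r`. -/
noncomputable def maxMod (P : Polynomial ℂ) (r : ℝ) : ℝ :=
  ⨆ z : sphere (0 : ℂ) r, ‖P.eval (z : ℂ)‖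

/-- The minimum of `|P(z)|` over the circle `|z| = r`. -/
noncomputable def minMod (P : Polynomial ℂ) (r : ℝ) : ℝ :=
  ⨅ z : sphere (0 : ℂ) r, ‖P.eval (z : ℂ)‖

/-!
Let `M` and `m` be the maximum and minimum of `|P|` on the unit circle, and let `|z| = 1`.
Laguerre's inequality `|F'(z)| ≤ |n F(z) - z F'(z)|`, applied to `F = P - w` for every value `w`
which `P` omits in the unit disc, shows that `P` takes in the unit disc all values of the disc with
centre `P(z) - z P'(z) / n` and radius `|P'(z)| / n`. That disc therefore lies in the annulus
`m ≤ |w| ≤ M` and does not contain `0`, so its diameter is at most `M - m`. Hence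
`|P'(z)| ≤ n (M - m) / 2`.

On the other hand, a polynomial `q` of degree at most `k ≥ 2` satisfies, for `|a| < 1` and
`|c| = 1`, a quadrature formula expressing `q(a) + c (1 - |a|²) q_k` (with `q_k` the coefficient of
`z ^ k`) as a weighted mean of the values of `q` at the solutions of `B(z) = c`, where
`B(z) = z ^ (k - 1) (z - a) / (1 - conj a * z)`. All these nodes lie on the unit circle, so
`|q(a)| + (1 - |a|²) |q_k| ≤ max |q|`. Applied to the reversal of a polynomial `Q`, this improves
the growth bound `|Q(z)| ≤ |z| ^ k max |Q|` by the term `(|z| ^ k - |z| ^ (k - 2)) |Q(0)|`, which is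
an inequality of Frappier, Rahman and Ruscheweyh. It remains to take `Q = P'` and to integrate along
rays.
-/

section Annulus

theorem two_mul_le_sub_of_forall_mem_ball {E : Type*} [NormedAddCommGroup E] [NormedSpace ℝ E]
    {c : E} {ρ m M : ℝ} (hmM : m ≤ M) (hzero : (0 : E) ∉ ball c ρ)
    (hm : ∀ w ∈ ball c ρ, m ≤ ‖w‖) (hM : ∀ w ∈ ball c ρ, ‖w‖ ≤ M) : 2 * ρ ≤ M - m := by
  by_contra! hlt
  obtain ⟨s, hs_gt, hsρ⟩ := exists_between (show (M - m) / 2 < ρ by linarith)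
  have hs : 0 < s := by linarith
  have hρc : ρ ≤ ‖c‖ := by simpa using hzero
  have hc : 0 < ‖c‖ := by linarith
  have mem_ball_of_abs_eq {t : ℝ} (ht : |t| = s) : (1 + t / ‖c‖) • c ∈ ball c ρ := by
    rwa [mem_ball_iff_norm, add_smul, one_smul, add_sub_cancel_left, norm_smul, norm_div,
      norm_norm, div_mul_cancel₀ _ hc.ne', Real.norm_eq_abs, ht]
  have norm_smul_center {t : ℝ} (ht : 0 ≤ ‖c‖ + t) : ‖(1 + t / ‖c‖) • c‖ = ‖c‖ + t := by
    have hcoeff : 1 + t / ‖c‖ = (‖c‖ + t) / ‖c‖ := by field_simp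
    rw [hcoeff, norm_smul, Real.norm_of_nonneg (div_nonneg ht hc.le), div_mul_cancel₀ _ hc.ne']
  have hfar := hM _ (mem_ball_of_abs_eq (abs_of_pos hs))
  have hnear := hm _ (mem_ball_of_abs_eq (t := -s) (by rw [abs_neg, abs_of_pos hs]))
  rw [norm_smul_center (by linarith)] at hfar hnear
  linarith

theorem le_norm_of_forall_mem_frontier_le_norm {E : Type*} [NormedAddCommGroup E]
    [NormedSpace ℂ E] [Nontrivial E] {f : E → ℂ} {U : Set E} (hU : Bornology.IsBounded U)
    (hf : DiffContOnCl ℂ f U) (hne : ∀ z ∈ U, f z ≠ 0) {m : ℝ}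
    (hm : ∀ z ∈ frontier U, m ≤ ‖f z‖) {z : E} (hz : z ∈ closure U) : m ≤ ‖f z‖ := by
  rcases le_or_gt m 0 with hm₀ | hm₀
  · exact hm₀.trans (norm_nonneg _)
  have hne_closure : ∀ w ∈ closure U, f w ≠ 0 := by
    intro w hw
    rw [closure_eq_self_union_frontier] at hw
    exact hw.elim (hne w) fun hw => norm_pos_iff.mp (hm₀.trans_le (hm w hw))
  have hinv : ‖(f z)⁻¹‖ ≤ m⁻¹ :=
    Complex.norm_le_of_forall_mem_frontier_norm_le hU (hf.inv hne_closure)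
      (fun w hw => by rw [Pi.inv_apply, norm_inv]; exact inv_anti₀ hm₀ (hm w hw)) hz
  rw [norm_inv] at hinv
  exact (inv_le_inv₀ (norm_pos_iff.mpr (hne_closure z hz)) hm₀).mp hinv

end Annulus

section Laguerre

theorem re_mul_one_div_sub_le_half {z w : ℂ} (h : ‖z‖ ≤ ‖w‖) : (z * (1 / (z - w))).re ≤ 1 / 2 := by
  rcases eq_or_ne (z - w) 0 with hzw | hzw
  · simp [hzw]
  have hsq : ‖z‖ ^ 2 ≤ ‖w‖ ^ 2 := by gcongr
  rw [mul_one_div, Complex.div_re, ← add_div, div_le_iff₀ (Complex.normSq_pos.mpr hzw)]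
  simp only [← Complex.normSq_eq_norm_sq, Complex.normSq_apply, Complex.sub_re,
    Complex.sub_im] at hsq ⊢
  linarith

theorem re_mul_sum_one_div_sub_le {z : ℂ} {s : Multiset ℂ} (h : ∀ w ∈ s, ‖z‖ ≤ ‖w‖) :
    (z * (s.map fun w => 1 / (z - w)).sum).re ≤ s.card / 2 := by
  induction s using Multiset.induction_on with
  | empty => simp
  | cons w s ih =>
    rw [Multiset.forall_mem_cons] at h
    rw [Multiset.map_cons, Multiset.sum_cons, mul_add, Complex.add_re, Multiset.card_cons]
    push_cast
    linarith [ih h.2, re_mul_one_div_sub_le_half h.1]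

theorem norm_le_norm_sub_of_re_le_half {u : ℂ} {t : ℝ} (ht : 0 ≤ t) (h : u.re ≤ t / 2) :
    ‖u‖ ≤ ‖(t : ℂ) - u‖ := by
  rw [← sq_le_sq₀ (norm_nonneg _) (norm_nonneg _)]
  simp only [← Complex.normSq_eq_norm_sq, Complex.normSq_apply, Complex.sub_re, Complex.sub_im,
    Complex.ofReal_re, Complex.ofReal_im]
  nlinarith

theorem norm_mul_eval_derivative_le {n : ℕ} {F : ℂ[X]} (hF : F.natDegree ≤ n) {z : ℂ}
    (hroots : ∀ w, F.IsRoot w → ‖z‖ ≤ ‖w‖) :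
    ‖z * F.derivative.eval z‖ ≤ ‖n * F.eval z - z * F.derivative.eval z‖ := by
  rcases eq_or_ne (F.eval z) 0 with hFz | hFz
  · simp [hFz]
  set u := z * (F.derivative.eval z / F.eval z) with hu
  have hderiv : z * F.derivative.eval z = u * F.eval z := by rw [hu]; field_simp
  have hu_re : u.re ≤ (n : ℝ) / 2 := by
    have hsum := re_mul_sum_one_div_sub_le fun w hw => hroots w (isRoot_of_mem_roots hw)
    rw [← (IsAlgClosed.splits F).eval_derivative_div_eval_of_ne_zero hFz] at hsum
    have hcard : (F.roots.card : ℝ) ≤ n := mod_cast F.card_roots'.trans hF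
    linarith
  have hu_norm : ‖u‖ ≤ ‖(n : ℂ) - u‖ := by
    exact_mod_cast norm_le_norm_sub_of_re_le_half n.cast_nonneg hu_re
  rw [hderiv, ← sub_mul, norm_mul u, norm_mul (n - u)]
  gcongr

theorem ball_subset_image_eval_ball {n : ℕ} (hn : n ≠ 0) {P : ℂ[X]} (hP : P.natDegree ≤ n)
    (z : ℂ) :
    ball (P.eval z - z * P.derivative.eval z / n) (‖z * P.derivative.eval z‖ / n) ⊆
      P.eval '' ball 0 ‖z‖ := by
  intro w hw
  by_contra hmem
  have homit : ∀ v, (P - C w).IsRoot v → ‖z‖ ≤ ‖v‖ := by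
    intro v hv
    by_contra! hvz
    exact hmem ⟨v, by simpa using hvz, by simpa [sub_eq_zero] using hv⟩
  have hlaguerre := norm_mul_eval_derivative_le (n := n) (by simpa using hP) homit
  have hcenter : n * (P - C w).eval z - z * P.derivative.eval z =
      n * (P.eval z - z * P.derivative.eval z / n - w) := by
    simp only [eval_sub, eval_C]
    field_simp
    ring
  rw [derivative_sub, derivative_C, sub_zero, hcenter, norm_mul (n : ℂ),
    Complex.norm_natCast] at hlaguerre
  rw [mem_ball_iff_norm', lt_div_iff₀' (by positivity)] at hw
  exact hw.not_ge hlaguerre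

theorem norm_eval_derivative_le_half_mul_sub {n : ℕ} (hn : n ≠ 0) {P : ℂ[X]}
    (hP : P.natDegree ≤ n) (hroots : ∀ w, P.IsRoot w → 1 ≤ ‖w‖) {m M : ℝ}
    (hm : ∀ z : ℂ, ‖z‖ = 1 → m ≤ ‖P.eval z‖) (hM : ∀ z : ℂ, ‖z‖ = 1 → ‖P.eval z‖ ≤ M)
    {z : ℂ} (hz : ‖z‖ = 1) : ‖P.derivative.eval z‖ ≤ n / 2 * (M - m) := by
  have hne : ∀ v ∈ ball (0 : ℂ) 1, P.eval v ≠ 0 := fun v hv hPv =>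
    (hroots v hPv).not_gt (mem_ball_zero_iff.mp hv)
  have mem_closure {v : ℂ} (hv : v ∈ ball 0 1) := subset_closure (s := ball (0 : ℂ) 1) hv
  have norm_of_frontier {v : ℂ} (hv : v ∈ frontier (ball 0 1)) : ‖v‖ = 1 := by
    simpa [frontier_ball] using hv
  have himage := hz ▸ ball_subset_image_eval_ball hn hP z
  have hdiam := two_mul_le_sub_of_forall_mem_ball ((hm z hz).trans (hM z hz))
    (fun h0 => by obtain ⟨v, hv, hPv⟩ := himage h0; exact hne v hv hPv)
    (fun w hw => by
      obtain ⟨v, hv, rfl⟩ := himage hw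
      exact le_norm_of_forall_mem_frontier_le_norm isBounded_ball P.differentiable.diffContOnCl hne
        (fun v hv => hm v (norm_of_frontier hv)) (mem_closure hv))
    (fun w hw => by
      obtain ⟨v, hv, rfl⟩ := himage hw
      exact Complex.norm_le_of_forall_mem_frontier_norm_le isBounded_ball
        P.differentiable.diffContOnCl (fun v hv => hM v (norm_of_frontier hv)) (mem_closure hv))
  rw [norm_mul, hz, one_mul] at hdiam
  field_simp at hdiam ⊢
  linarith

end Laguerre

section Interpolation

theorem nodup_roots_of_eval_derivative_ne_zero {R : Type*} [CommRing R] [IsDomain R] {w : R[X]}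
    (h : ∀ z, w.IsRoot z → w.derivative.eval z ≠ 0) : w.roots.Nodup := by
  classical
  rcases eq_or_ne w 0 with rfl | hw
  · simp
  rw [Multiset.nodup_iff_count_le_one]
  intro z
  rw [count_roots]
  by_contra! hz
  obtain ⟨hroot, hderiv⟩ := (one_lt_rootMultiplicity_iff_isRoot hw).mp hz
  exact h z hroot hderiv

variable {K : Type*} [Field K]

theorem nodal_roots_toFinset [DecidableEq K] {w : K[X]} (hmonic : w.Monic) (hsplits : w.Splits)
    (hnodup : w.roots.Nodup) : Lagrange.nodal w.roots.toFinset id = w := by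
  conv_rhs => rw [hsplits.eq_prod_roots_of_monic hmonic]
  rw [Lagrange.nodal_eq, Finset.prod, Multiset.toFinset_val, hnodup.dedup]
  simp only [id]

theorem eval_eq_coeff_mul_add_sum_roots [DecidableEq K] {w : K[X]} (hmonic : w.Monic)
    (hsplits : w.Splits) (hnodup : w.roots.Nodup) {q : K[X]} (hq : q.natDegree ≤ w.natDegree)
    {x : K} (hx : ¬ w.IsRoot x) :
    q.eval x = q.coeff w.natDegree * w.eval x +
      ∑ z ∈ w.roots.toFinset, w.eval x / (w.derivative.eval z * (x - z)) * q.eval z := by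
  set q' := q - C (q.coeff w.natDegree) * w with hq'
  have isRoot_of_mem {z : K} (hz : z ∈ w.roots.toFinset) : w.IsRoot z :=
    isRoot_of_mem_roots (Multiset.mem_toFinset.mp hz)
  have hcard : w.roots.toFinset.card = w.natDegree := by
    rw [Multiset.toFinset_card_of_nodup hnodup, hsplits.natDegree_eq_card_roots]
  have hdegree : q'.degree < w.roots.toFinset.card := by
    rw [hcard, degree_lt_iff_coeff_zero]
    intro i hi
    rcases hi.eq_or_lt with rfl | hi
    · simp [hq', hmonic.coeff_natDegree]
    · simp [hq', coeff_eq_zero_of_natDegree_lt hi, coeff_eq_zero_of_natDegree_lt (hq.trans_lt hi)]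
  have hinterp := congrArg (eval x) (Lagrange.eq_interpolate (Set.injOn_id _) hdegree)
  rw [Lagrange.eval_interpolate_not_at_node _ fun z hz => by
    rintro rfl; exact hx (isRoot_of_mem hz), nodal_roots_toFinset hmonic hsplits hnodup] at hinterp
  have hsum : q'.eval x =
      ∑ z ∈ w.roots.toFinset, w.eval x / (w.derivative.eval z * (x - z)) * q.eval z := by
    rw [hinterp, Finset.mul_sum]
    refine Finset.sum_congr rfl fun z hz => ?_
    rw [Lagrange.nodalWeight_eq_eval_derivative_nodal hz,
      nodal_roots_toFinset hmonic hsplits hnodup]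
    simp only [id, hq', eval_sub, eval_mul, eval_C, (isRoot_of_mem hz).eq_zero, div_eq_mul_inv,
      mul_inv]
    ring
  rw [← hsum, hq', eval_sub, eval_mul, eval_C]
  ring

end Interpolation

section Quadrature

open ComplexConjugate

/-- The monic polynomial of degree `j + 2` whose roots are the solutions of `B z = c`, where `B` is
the Blaschke product `B z = z ^ (j + 1) * (z - a) / (1 - conj a * z)`. Its roots are the nodes of
the quadrature formula for `q ↦ q(a) + c (1 - |a|²) q_{j+2}`. -/
noncomputable def blaschkeNodal (j : ℕ) (a c : ℂ) : ℂ[X] :=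
  X ^ (j + 1) * (X - C a) - C c * (1 - C (conj a) * X)

/-- The weight at a point `z` of the unit circle in the quadrature formula whose nodes are the roots
of `blaschkeNodal j a c`. It is `(1 - |a|²) / |z - a|²` divided by the absolute value at `z` of the
derivative of the Blaschke product, written without the singularity at `a`. -/
noncomputable def blaschkeWeight (j : ℕ) (a z : ℂ) : ℝ :=
  (1 - ‖a‖ ^ 2) / ((j + 1) * ‖z - a‖ ^ 2 + (1 - ‖a‖ ^ 2))

variable {j : ℕ} {a c z : ℂ}

theorem eval_blaschkeNodal (j : ℕ) (a c z : ℂ) :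
    (blaschkeNodal j a c).eval z = z ^ (j + 1) * (z - a) - c * (1 - conj a * z) := by
  simp [blaschkeNodal]

theorem eval_derivative_blaschkeNodal (j : ℕ) (a c z : ℂ) :
    (blaschkeNodal j a c).derivative.eval z =
      (j + 1) * z ^ j * (z - a) + z ^ (j + 1) + c * conj a := by
  simp [blaschkeNodal]

theorem natDegree_X_pow_mul_X_sub_C {R : Type*} [CommRing R] [Nontrivial R] (k : ℕ) (r : R) :
    (X ^ k * (X - C r)).natDegree = k + 1 := by
  rw [(monic_X_pow _).natDegree_mul (monic_X_sub_C _), natDegree_X_pow, natDegree_X_sub_C]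

theorem natDegree_C_mul_lt_natDegree_X_pow_mul (j : ℕ) (a c : ℂ) :
    (C c * (1 - C (conj a) * X)).natDegree < (X ^ (j + 1) * (X - C a)).natDegree := by
  have : (C c * (1 - C (conj a) * X)).natDegree ≤ 1 := by compute_degree
  rw [natDegree_X_pow_mul_X_sub_C]
  omega

theorem monic_blaschkeNodal (j : ℕ) (a c : ℂ) : (blaschkeNodal j a c).Monic :=
  ((monic_X_pow _).mul (monic_X_sub_C _)).sub_of_left
    (degree_lt_degree (natDegree_C_mul_lt_natDegree_X_pow_mul j a c))

theorem natDegree_blaschkeNodal (j : ℕ) (a c : ℂ) : (blaschkeNodal j a c).natDegree = j + 2 := by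
  rw [blaschkeNodal, natDegree_sub_eq_left_of_natDegree_lt
    (natDegree_C_mul_lt_natDegree_X_pow_mul j a c), natDegree_X_pow_mul_X_sub_C]

theorem norm_one_sub_conj_mul_sq_sub_norm_sub_sq (a z : ℂ) :
    ‖1 - conj a * z‖ ^ 2 - ‖z - a‖ ^ 2 = (1 - ‖a‖ ^ 2) * (1 - ‖z‖ ^ 2) := by
  simp only [← Complex.normSq_eq_norm_sq, Complex.normSq_apply, Complex.sub_re, Complex.sub_im,
    Complex.mul_re, Complex.mul_im, Complex.conj_re, Complex.conj_im, Complex.one_re,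
    Complex.one_im]
  ring

theorem one_sub_norm_sq_pos {E : Type*} [SeminormedAddCommGroup E] {x : E} (hx : ‖x‖ < 1) :
    0 < 1 - ‖x‖ ^ 2 :=
  sub_pos.mpr (pow_lt_one₀ (norm_nonneg x) hx two_ne_zero)

theorem norm_eq_one_of_isRoot_blaschkeNodal (ha : ‖a‖ < 1) (hc : ‖c‖ = 1)
    (hz : (blaschkeNodal j a c).IsRoot z) : ‖z‖ = 1 := by
  have hnorm : ‖z‖ ^ (j + 1) * ‖z - a‖ = ‖1 - conj a * z‖ := by
    rw [IsRoot, eval_blaschkeNodal, sub_eq_zero] at hz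
    simpa [hc] using congrArg norm hz
  have hidentity := norm_one_sub_conj_mul_sq_sub_norm_sub_sq a z
  rw [← hnorm] at hidentity
  rcases lt_trichotomy ‖z‖ 1 with hz₁ | hz₁ | hz₁
  · have hle : (‖z‖ ^ (j + 1) * ‖z - a‖) ^ 2 ≤ ‖z - a‖ ^ 2 := by
      gcongr
      exact mul_le_of_le_one_left (norm_nonneg _) (pow_le_one₀ (norm_nonneg _) hz₁.le)
    linarith [mul_pos (one_sub_norm_sq_pos ha) (one_sub_norm_sq_pos hz₁)]
  · exact hz₁
  · have hle : ‖z - a‖ ^ 2 ≤ (‖z‖ ^ (j + 1) * ‖z - a‖) ^ 2 := by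
      gcongr
      exact le_mul_of_one_le_left (norm_nonneg _) (one_le_pow₀ hz₁.le)
    linarith [mul_pos (one_sub_norm_sq_pos ha) (sub_pos.mpr (one_lt_pow₀ hz₁ two_ne_zero))]

theorem sub_mul_eval_derivative_blaschkeNodal (ha : ‖a‖ < 1) (hc : ‖c‖ = 1)
    (hz : (blaschkeNodal j a c).IsRoot z) :
    (z - a) * (blaschkeNodal j a c).derivative.eval z =
      c * ((j + 1) * ‖z - a‖ ^ 2 + (1 - ‖a‖ ^ 2)) := by
  have hz_norm := norm_eq_one_of_isRoot_blaschkeNodal ha hc hz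
  have hz₀ : z ≠ 0 := norm_pos_iff.mp (hz_norm ▸ one_pos)
  have hz_conj : z * conj z = 1 := by simp [Complex.mul_conj', hz_norm]
  rw [IsRoot, eval_blaschkeNodal] at hz
  rw [eval_derivative_blaschkeNodal, ← Complex.mul_conj', ← Complex.mul_conj', map_sub]
  apply mul_left_cancel₀ hz₀
  linear_combination ((j + 1) * (z - a) + z) * hz - c * (j + 1) * (z - a) * hz_conj

theorem blaschkeWeight_denom_pos (ha : ‖a‖ < 1) (j : ℕ) (z : ℂ) :
    0 < (j + 1) * ‖z - a‖ ^ 2 + (1 - ‖a‖ ^ 2) := by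
  have := one_sub_norm_sq_pos ha
  positivity

theorem blaschkeWeight_nonneg (ha : ‖a‖ < 1) (j : ℕ) (z : ℂ) : 0 ≤ blaschkeWeight j a z :=
  div_nonneg (one_sub_norm_sq_pos ha).le (blaschkeWeight_denom_pos ha j z).le

theorem eval_derivative_blaschkeNodal_ne_zero (ha : ‖a‖ < 1) (hc : ‖c‖ = 1)
    (hz : (blaschkeNodal j a c).IsRoot z) : (blaschkeNodal j a c).derivative.eval z ≠ 0 := by
  have hc₀ : c ≠ 0 := norm_pos_iff.mp (hc ▸ one_pos)
  refine right_ne_zero_of_mul (a := z - a) ?_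
  rw [sub_mul_eval_derivative_blaschkeNodal ha hc hz]
  exact mul_ne_zero hc₀ (mod_cast (blaschkeWeight_denom_pos ha j z).ne')

theorem blaschkeWeight_eq (ha : ‖a‖ < 1) (hc : ‖c‖ = 1) (hz : (blaschkeNodal j a c).IsRoot z) :
    (blaschkeWeight j a z : ℂ) = (blaschkeNodal j a c).eval a /
      ((blaschkeNodal j a c).derivative.eval z * (a - z)) := by
  have hc₀ : c ≠ 0 := norm_pos_iff.mp (hc ▸ one_pos)
  have heval : (blaschkeNodal j a c).eval a = -(c * (1 - ‖a‖ ^ 2)) := by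
    rw [eval_blaschkeNodal, Complex.conj_mul']
    ring
  have hdenom : (blaschkeNodal j a c).derivative.eval z * (a - z) =
      -(c * ((j + 1) * ‖z - a‖ ^ 2 + (1 - ‖a‖ ^ 2))) := by
    rw [← sub_mul_eval_derivative_blaschkeNodal ha hc hz]
    ring
  rw [heval, hdenom, neg_div_neg_eq, mul_div_mul_left _ _ hc₀, blaschkeWeight]
  push_cast
  rfl

open Classical in
theorem eval_add_coeff_eq_sum_blaschkeWeight (ha : ‖a‖ < 1) (hc : ‖c‖ = 1) {q : ℂ[X]}
    (hq : q.natDegree ≤ j + 2) :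
    q.eval a + c * ((1 - ‖a‖ ^ 2) * q.coeff (j + 2)) =
      ∑ z ∈ (blaschkeNodal j a c).roots.toFinset, blaschkeWeight j a z * q.eval z := by
  have isRoot_of_mem {z : ℂ} (hz : z ∈ (blaschkeNodal j a c).roots.toFinset) :
      (blaschkeNodal j a c).IsRoot z := isRoot_of_mem_roots (Multiset.mem_toFinset.mp hz)
  have hinterp := eval_eq_coeff_mul_add_sum_roots (monic_blaschkeNodal j a c)
    (IsAlgClosed.splits _)
    (nodup_roots_of_eval_derivative_ne_zero fun z => eval_derivative_blaschkeNodal_ne_zero ha hc)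
    (hq.trans_eq (natDegree_blaschkeNodal j a c).symm)
    (fun hroot => ha.ne (norm_eq_one_of_isRoot_blaschkeNodal ha hc hroot))
  rw [Finset.sum_congr rfl fun z hz => by rw [blaschkeWeight_eq ha hc (isRoot_of_mem hz)], hinterp,
    natDegree_blaschkeNodal, eval_blaschkeNodal, Complex.conj_mul']
  ring

theorem norm_eval_add_coeff_le (ha : ‖a‖ < 1) (hc : ‖c‖ = 1) {q : ℂ[X]}
    (hq : q.natDegree ≤ j + 2) {B : ℝ} (hB : ∀ z : ℂ, ‖z‖ = 1 → ‖q.eval z‖ ≤ B) :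
    ‖q.eval a + c * ((1 - ‖a‖ ^ 2) * q.coeff (j + 2))‖ ≤ B := by
  classical
  set nodes := (blaschkeNodal j a c).roots.toFinset
  have hsum : ∑ z ∈ nodes, blaschkeWeight j a z = 1 := by
    have hone := eval_add_coeff_eq_sum_blaschkeWeight (j := j) (q := 1) ha hc (by simp)
    have hcoeff : (1 : ℂ[X]).coeff (j + 2) = 0 := by simp [coeff_one]
    simp only [hcoeff, eval_one, mul_zero, add_zero, mul_one] at hone
    exact_mod_cast hone.symm
  rw [eval_add_coeff_eq_sum_blaschkeWeight ha hc hq]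
  calc ‖∑ z ∈ nodes, blaschkeWeight j a z * q.eval z‖
      ≤ ∑ z ∈ nodes, blaschkeWeight j a z * B := by
        refine norm_sum_le_of_le _ fun z hz => ?_
        have hz_norm := norm_eq_one_of_isRoot_blaschkeNodal ha hc
          (isRoot_of_mem_roots (Multiset.mem_toFinset.mp hz))
        rw [norm_mul, Complex.norm_of_nonneg (blaschkeWeight_nonneg ha j z)]
        exact mul_le_mul_of_nonneg_left (hB z hz_norm) (blaschkeWeight_nonneg ha j z)
    _ = B := by rw [← Finset.sum_mul, hsum, one_mul]

theorem exists_norm_eq_one_norm_add_mul {𝕜 : Type*} [RCLike 𝕜] (x y : 𝕜) :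
    ∃ c : 𝕜, ‖c‖ = 1 ∧ ‖x + c * y‖ = ‖x‖ + ‖y‖ := by
  obtain ⟨b, hb, hx⟩ := RCLike.exists_norm_mul_eq_self x
  obtain ⟨d, hd, hy⟩ := RCLike.exists_norm_eq_mul_self y
  refine ⟨b * d, by rw [norm_mul, hb, hd, one_mul], ?_⟩
  have hfactor : x + b * d * y = b * (‖x‖ + ‖y‖ : ℝ) := by
    push_cast
    linear_combination -hx - b * hy
  rw [hfactor, norm_mul, hb, one_mul, RCLike.norm_of_nonneg (by positivity)]

theorem norm_eval_add_norm_coeff_le (ha : ‖a‖ ≤ 1) {q : ℂ[X]} (hq : q.natDegree ≤ j + 2) {B : ℝ}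
    (hB : ∀ z : ℂ, ‖z‖ = 1 → ‖q.eval z‖ ≤ B) :
    ‖q.eval a‖ + (1 - ‖a‖ ^ 2) * ‖q.coeff (j + 2)‖ ≤ B := by
  rcases ha.eq_or_lt with ha | ha
  · simpa [ha] using hB a ha
  obtain ⟨c, hc, hadd⟩ :=
    exists_norm_eq_one_norm_add_mul (q.eval a) (((1 - ‖a‖ ^ 2 : ℝ) : ℂ) * q.coeff (j + 2))
  rw [norm_mul, Complex.norm_of_nonneg (one_sub_norm_sq_pos ha).le] at hadd
  rw [← hadd]
  exact_mod_cast norm_eval_add_coeff_le ha hc hq hB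

end Quadrature

section Growth

theorem eval_inv_reflect_mul_pow {K : Type*} [Field K] {k : ℕ} {Q : K[X]} (hQ : Q.natDegree ≤ k)
    {x : K} (hx : x ≠ 0) : (Q.reflect k).eval x⁻¹ * x ^ k = Q.eval x := by
  let _ := invertibleOfNonzero hx
  simpa only [invOf_eq_inv, eval₂_id] using eval₂_reflect_mul_pow (RingHom.id K) x k Q hQ

theorem norm_eval_le_pow_mul_sub {j : ℕ} {Q : ℂ[X]} (hQ : Q.natDegree ≤ j + 2) {B : ℝ}
    (hB : ∀ z : ℂ, ‖z‖ = 1 → ‖Q.eval z‖ ≤ B) {z : ℂ} (hz : 1 ≤ ‖z‖) :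
    ‖Q.eval z‖ ≤ ‖z‖ ^ (j + 2) * B - (‖z‖ ^ (j + 2) - ‖z‖ ^ j) * ‖Q.eval 0‖ := by
  have hz_pos : 0 < ‖z‖ := one_pos.trans_le hz
  have norm_eval_reflect {v : ℂ} (hv : v ≠ 0) :
      ‖(Q.reflect (j + 2)).eval v⁻¹‖ * ‖v‖ ^ (j + 2) = ‖Q.eval v‖ := by
    rw [← eval_inv_reflect_mul_pow hQ hv, norm_mul, norm_pow]
  have hreflect : ∀ v : ℂ, ‖v‖ = 1 → ‖(Q.reflect (j + 2)).eval v‖ ≤ B := by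
    intro v hv
    have hv₀ : v ≠ 0 := norm_pos_iff.mp (hv ▸ one_pos)
    have hv_inv : ‖v⁻¹‖ = 1 := by rw [norm_inv, hv, inv_one]
    simpa [hv_inv, norm_eval_reflect] using
      (norm_eval_reflect (inv_ne_zero hv₀)).trans_le (hB v⁻¹ hv_inv)
  have hcoeff : (Q.reflect (j + 2)).coeff (j + 2) = Q.eval 0 := by
    rw [coeff_reflect, revAt_le le_rfl, Nat.sub_self, coeff_zero_eq_eval_zero]
  have hinner := norm_eval_add_norm_coeff_le (a := z⁻¹)
    (by rw [norm_inv]; exact inv_le_one_of_one_le₀ hz)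
    (natDegree_reflect_le.trans (max_le le_rfl hQ)) hreflect
  rw [hcoeff, norm_inv] at hinner
  have hpow : ‖z‖ ^ (j + 2) - ‖z‖ ^ j = ‖z‖ ^ (j + 2) * (1 - ‖z‖⁻¹ ^ 2) := by
    field_simp
    ring
  rw [← norm_eval_reflect (norm_pos_iff.mp hz_pos), hpow]
  linarith [mul_le_mul_of_nonneg_left hinner (pow_pos hz_pos (j + 2)).le]

theorem hasDerivAt_eval_ofReal_mul (P : ℂ[X]) (u : ℂ) (t : ℝ) :
    HasDerivAt (fun s : ℝ => P.eval (s * u)) (P.derivative.eval (t * u) * u) t := by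
  have hray : HasDerivAt (fun s : ℝ => (s : ℂ) * u) u t := by
    simpa using Complex.ofRealCLM.hasDerivAt.mul_const u
  exact (P.hasDerivAt _).comp t hray

theorem hasDerivAt_pow_succ_sub_one_div (k : ℕ) (t : ℝ) :
    HasDerivAt (fun s : ℝ => (s ^ (k + 1) - 1) / (k + 1)) (t ^ k) t := by
  refine (((hasDerivAt_pow (k + 1) t).sub_const 1).div_const _).congr_deriv ?_
  push_cast
  field_simp

theorem norm_eval_le_of_norm_eval_derivative_le {j : ℕ} {P : ℂ[X]} (hP : P.natDegree ≤ j + 3)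
    {M B : ℝ} (hM : ∀ z : ℂ, ‖z‖ = 1 → ‖P.eval z‖ ≤ M)
    (hB : ∀ z : ℂ, ‖z‖ = 1 → ‖P.derivative.eval z‖ ≤ B) {z : ℂ} (hz : 1 ≤ ‖z‖) :
    ‖P.eval z‖ ≤ M + (‖z‖ ^ (j + 3) - 1) / (j + 3) * B -
      ((‖z‖ ^ (j + 3) - 1) / (j + 3) - (‖z‖ ^ (j + 1) - 1) / (j + 1)) *
        ‖P.derivative.eval 0‖ := by
  set p := ‖P.derivative.eval 0‖
  obtain ⟨u, hu, hzu⟩ := Complex.exists_norm_mul_eq_self z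
  rw [mul_comm] at hzu
  have hdegree : P.derivative.natDegree ≤ j + 2 := P.natDegree_derivative_le.trans (by omega)
  have hbound (t : ℝ) : HasDerivAt (fun t : ℝ => M + (t ^ (j + 3) - 1) / (j + 3) * B -
      ((t ^ (j + 3) - 1) / (j + 3) - (t ^ (j + 1) - 1) / (j + 1)) * p)
      (t ^ (j + 2) * B - (t ^ (j + 2) - t ^ j) * p) t := by
    have htop := hasDerivAt_pow_succ_sub_one_div (j + 2) t
    have hlow := hasDerivAt_pow_succ_sub_one_div j t
    rw [show ((j + 2 : ℕ) : ℝ) + 1 = j + 3 by push_cast; ring] at htop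
    exact ((htop.mul_const B).const_add M).sub ((htop.sub hlow).mul_const p)
  have hgrowth := image_norm_le_of_norm_deriv_right_le_deriv_boundary
    (f := fun t : ℝ => P.eval (t * u)) (a := 1) (b := ‖z‖)
    (fun t _ => (hasDerivAt_eval_ofReal_mul P u t).continuousAt.continuousWithinAt)
    (fun t _ => (hasDerivAt_eval_ofReal_mul P u t).hasDerivWithinAt)
    (by simpa using hM u hu) hbound
    (fun t ht => by
      have hnorm : ‖(t : ℂ) * u‖ = t := by
        rw [norm_mul, hu, mul_one, Complex.norm_of_nonneg (zero_le_one.trans ht.1)]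
      have := norm_eval_le_pow_mul_sub hdegree hB (hnorm.symm ▸ ht.1)
      rwa [hnorm, ← mul_one ‖P.derivative.eval _‖, ← hu, ← norm_mul] at this)
    (Set.right_mem_Icc.mpr hz)
  simpa only [hzu] using hgrowth

end Growth

section MaxModMinMod

variable (P : ℂ[X])

theorem norm_eval_le_maxMod (z : ℂ) : ‖P.eval z‖ ≤ maxMod P ‖z‖ :=
  le_ciSup (f := fun v : sphere (0 : ℂ) ‖z‖ => ‖P.eval (v : ℂ)‖)
    (isCompact_range (P.continuous.comp continuous_subtype_val).norm).bddAbove ⟨z, by simp⟩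

theorem minMod_le_norm_eval (z : ℂ) : minMod P ‖z‖ ≤ ‖P.eval z‖ :=
  ciInf_le (f := fun v : sphere (0 : ℂ) ‖z‖ => ‖P.eval (v : ℂ)‖)
    ⟨0, Set.forall_mem_range.mpr fun _ => norm_nonneg _⟩ ⟨z, by simp⟩

theorem minMod_nonneg (r : ℝ) : 0 ≤ minMod P r :=
  Real.iInf_nonneg fun _ => norm_nonneg _

variable {P}

theorem maxMod_le {r b : ℝ} (hr : 0 ≤ r) (h : ∀ z : ℂ, ‖z‖ = r → ‖P.eval z‖ ≤ b) :
    maxMod P r ≤ b :=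
  have : Nonempty (sphere (0 : ℂ) r) := (NormedSpace.sphere_nonempty.mpr hr).to_subtype
  ciSup_le fun z => h z (mem_sphere_zero_iff_norm.mp z.2)

end MaxModMinMod

theorem stmt_7_general (n : ℕ) (hn : 2 < n) (P : Polynomial ℂ) (hdeg : P.natDegree ≤ n)
    (hroots : ∀ w : ℂ, P.IsRoot w → 1 ≤ ‖w‖) (R : ℝ) (hR : 1 ≤ R) :
    maxMod P R ≤
      ((R ^ n + 1) / 2) * maxMod P 1 - ((R ^ n - 1) / 2) * minMod P 1 -
        ((R ^ n - 1) / (n : ℝ) - (R ^ (n - 2) - 1) / ((n : ℝ) - 2)) *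
          ‖(Polynomial.derivative P).eval 0‖ := by
  have hm : ∀ z : ℂ, ‖z‖ = 1 → minMod P 1 ≤ ‖P.eval z‖ := fun z hz =>
    hz ▸ minMod_le_norm_eval P z
  have hM : ∀ z : ℂ, ‖z‖ = 1 → ‖P.eval z‖ ≤ maxMod P 1 := fun z hz => hz ▸ norm_eval_le_maxMod P z
  have hderiv : ∀ z : ℂ, ‖z‖ = 1 →
      ‖P.derivative.eval z‖ ≤ n / 2 * (maxMod P 1 - minMod P 1) := fun z hz =>
    norm_eval_derivative_le_half_mul_sub (by omega) hdeg hroots hm hM hz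
  obtain ⟨j, rfl⟩ : ∃ j, n = j + 3 := ⟨n - 3, by omega⟩
  refine maxMod_le (zero_le_one.trans hR) fun z hz => ?_
  refine (norm_eval_le_of_norm_eval_derivative_le hdeg hM hderiv (hz ▸ hR)).trans_eq ?_
  rw [hz, show j + 3 - 2 = j + 1 by omega,
    show ((j + 3 : ℕ) : ℝ) - 2 = j + 1 by push_cast; ring]
  push_cast
  field_simp
  ring

theorem stmt_7 (n : ℕ) (hn : 2 < n) (P : Polynomial ℂ) (hdeg : P.natDegree = n)
    (hroots : ∀ w : ℂ, P.IsRoot w → 1 ≤ ‖w‖)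
    (α : ℂ) (hα : ‖α‖ ≤ 1) (R : ℝ) (hR : 1 ≤ R) :
    maxMod P R ≤
      ((R ^ n + 1) / 2) * maxMod P 1 -
        ‖α‖ * ((R ^ n - 1) / 2) * minMod P 1 -
        ((R ^ n - 1) / (n : ℝ) - (R ^ (n - 2) - 1) / ((n : ℝ) - 2)) *
          ‖(Polynomial.derivative P).eval 0‖ := by
  have hcoeff : 0 ≤ (R ^ n - 1) / 2 * minMod P 1 :=
    mul_nonneg (by linarith [one_le_pow₀ hR (n := n)]) (minMod_nonneg P 1)
  linarith [stmt_7_general n hn P hdeg.le hroots R hR, mul_le_of_le_one_left hcoeff hα]
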